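/- Let A be a finite alphabet, σ : A* → A* a primitive substitution, and x an infinite word over A that is an aperiodic fixed point of σ. Then there exist a finite set C of colors, a factor coloring c : Fact(x) → C, and a positive integer h such that no nonempty prefix of x admits a monotone c-monochromatic factorization of length h. -/

import Mathlib

/-- The factor of the infinite word `x` of length `n` starting at position `i`,
i.e. the word `x_i x_{i+1} ⋯ x_{i+n-1}`. -/
def seg {A : Type*} (x : ℕ → A) (i n : ℕ) : List A :=
  (List.range n).map fun k => x (i + k)

/-- `u` is a (nonempty, finite) factor of the infinite word `x`. -/
def IsFactor {A : Type*} (x : ℕ → A) (u : List A) : Prop :=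
  u ≠ [] ∧ ∃ i, u = seg x i u.length

/-- `u` is a (finite) prefix of the infinite word `x`. -/
def IsPrefixOf {A : Type*} (x : ℕ → A) (u : List A) : Prop :=
  u = seg x 0 u.length

/-- The finite word `u` occurs in the finite word `v` at position `i`. -/
def OccursAt {A : Type*} (u v : List A) (i : ℕ) : Prop :=
  i + u.length ≤ v.length ∧ (v.drop i).take u.length = u

/-- `w` is a return word to `u` in `x`: `w` is nonempty, `w ++ u` is a factor of
`x`, and `u` occurs exactly twice in `w ++ u`. -/
def IsReturn {A : Type*} (x : ℕ → A) (u w : List A) : Prop :=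
  w ≠ [] ∧ IsFactor x (w ++ u) ∧ {i | OccursAt u (w ++ u) i}.ncard = 2

/-- The set of return words to `u` in `x`. -/
def Ret {A : Type*} (x : ℕ → A) (u : List A) : Set (List A) :=
  {w | IsReturn x u w}

/-- `x` is uniformly recurrent: every factor has a nonempty and finite set of
return words. -/
def UniformlyRecurrent {A : Type*} (x : ℕ → A) : Prop :=
  ∀ u, IsFactor x u → (Ret x u).Nonempty ∧ (Ret x u).Finite

/-- `x` is aperiodic: there is no `n ≥ 1` with `x (i + n) = x i` for all `i`. -/
def Aperiodic {A : Type*} (x : ℕ → A) : Prop :=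
  ¬ ∃ n : ℕ, 1 ≤ n ∧ ∀ i : ℕ, x (i + n) = x i

/-- Apply a substitution (given by its action `σ` on letters) to a finite word. -/
def substApply {A : Type*} (σ : A → List A) (w : List A) : List A :=
  (w.map σ).flatten

/-- `σ^n` applied to a letter. -/
def substIter {A : Type*} (σ : A → List A) : ℕ → A → List A
  | 0, a => [a]
  | n + 1, a => substApply σ (substIter σ n a)

/-- The substitution `σ` is primitive: some power `σ^n` maps every letter to a word
containing every letter. -/
def Primitive {A : Type*} (σ : A → List A) : Prop :=
  ∃ n : ℕ, ∀ a b : A, a ∈ substIter σ n b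

/-- The infinite word `x` is a fixed point of the substitution `σ`: applying `σ`
letterwise to `x` and concatenating gives back `x`, i.e. the image of every finite
prefix of `x` is again a prefix of `x`. -/
def IsFixedPoint {A : Type*} (σ : A → List A) (x : ℕ → A) : Prop :=
  ∀ n : ℕ, IsPrefixOf x (substApply σ (seg x 0 n))

/-! Every factor of length `d + 1` of a primitive fixed point starts within the first `O(d)`
positions: choose `n` with all `|σ^n(a)|` comparable to `d`, so that the factor lies inside
`σ^n(ab)` for some two-letter factor `ab`, and all two-letter factors occur early. If `x` is
aperiodic, this bounds the exponents of its prefixes: a prefix of length `d + m` with period `d`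
has `m < K d`, as otherwise the period would propagate to all of `x`.

A factor `u` is colored by whether `u` is a prefix, whether `u u` is a prefix, and by
`⌊log_b |u|⌋` modulo a large `N`, where `b = 1 + 1/(K + 1)`. Suppose that a prefix is a monotone
monochromatic product `U_0 ⋯ U_K`. As long as the blocks before `U_i` all equal `u = U_0`, the
prefix `U_i` recurs after at most `K |u|` letters, so `|U_i| < K² |u|`. Then the logarithmic color
forces `|U_i|` to be so close to `|u|` that `u u` and `U_i U_i` can both be prefixes only if
`U_i = u`. Hence `u^(K+1)` is a prefix, contradicting the bound on exponents.
-/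

/-! ### Factors of an infinite word at a given position -/

section Factors

variable {A B : Type*} {x : ℕ → A} {u v w : List A} {i j n : ℕ}

/-- The finite word `w` is the factor of `x` starting at position `i`; the case `i = 0` is
definitionally `IsPrefixOf x w`. -/
def IsFactorAt (x : ℕ → A) (i : ℕ) (w : List A) : Prop :=
  w = seg x i w.length

@[simp]
lemma length_seg (x : ℕ → A) (i n : ℕ) : (seg x i n).length = n := by
  simp [seg]

lemma seg_add (x : ℕ → A) (i m n : ℕ) : seg x i (m + n) = seg x i m ++ seg x (i + m) n := by
  simp [seg, List.range_add, Function.comp_def, add_assoc]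

lemma seg_one (x : ℕ → A) (i : ℕ) : seg x i 1 = [x i] := by
  simp [seg]

lemma seg_eq_seg_iff : seg x i n = seg x j n ↔ ∀ t < n, x (i + t) = x (j + t) := by
  simp [seg]

lemma isFactorAt_seg (x : ℕ → A) (i n : ℕ) : IsFactorAt x i (seg x i n) := by
  rw [IsFactorAt, length_seg]

lemma isFactorAt_append_iff :
    IsFactorAt x i (u ++ v) ↔ IsFactorAt x i u ∧ IsFactorAt x (i + u.length) v := by
  rw [IsFactorAt, List.length_append, seg_add]
  exact ⟨fun h => List.append_inj h (length_seg x i _).symm, fun h => congrArg₂ _ h.1 h.2⟩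

lemma IsFactorAt.seg_add_eq_seg_add (hi : IsFactorAt x i w) (hj : IsFactorAt x j w)
    {t : ℕ} (h : t + n ≤ w.length) : seg x (i + t) n = seg x (j + t) n := by
  have hij : ∀ s < w.length, x (i + s) = x (j + s) := seg_eq_seg_iff.1 (hi.symm.trans hj)
  refine seg_eq_seg_iff.2 fun s hs => ?_
  simpa only [add_assoc] using hij (t + s) (by omega)

lemma IsPrefixOf.of_prefix (hw : IsPrefixOf x w) (h : u <+: w) : IsPrefixOf x u := by
  obtain ⟨v, rfl⟩ := h
  exact (isFactorAt_append_iff.1 hw).1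

lemma IsPrefixOf.prefix_of_length_le (hu : IsPrefixOf x u) (hv : IsPrefixOf x v)
    (h : u.length ≤ v.length) : u <+: v := by
  rw [hu, hv, ← Nat.add_sub_of_le h, seg_add]
  exact List.prefix_append _ _

lemma exists_bound_forall_exists_seg_eq [Finite A] (x : ℕ → A) (n : ℕ) :
    ∃ R, ∀ i, ∃ r ≤ R, seg x r n = seg x i n := by
  have : Finite (Set.range fun i => seg x i n) :=
    (List.finite_length_eq A n).subset (Set.range_subset_iff.2 fun i => length_seg x i n)
  obtain ⟨R, hR⟩ := Finite.bddAbove_range (Set.rangeSplitting fun i => seg x i n)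
  exact ⟨R, fun i => ⟨_, hR (Set.mem_range_self ⟨_, i, rfl⟩),
    Set.apply_rangeSplitting (fun i => seg x i n) _⟩⟩

lemma exists_eq_length_flatMap_seg_add {g : A → List B} (hg : ∀ a, g a ≠ []) (x : ℕ → A)
    (j : ℕ) : ∃ m, ∃ t < (g (x m)).length, j = ((seg x 0 m).flatMap g).length + t := by
  have hpos (a : A) : 0 < (g a).length := List.length_pos_iff.2 (hg a)
  induction j with
  | zero => exact ⟨0, 0, hpos _, by simp [seg]⟩
  | succ j ih =>
    obtain ⟨m, t, ht, rfl⟩ := ih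
    rcases Nat.lt_or_ge (t + 1) (g (x m)).length with h | h
    · exact ⟨m, t + 1, h, rfl⟩
    · refine ⟨m + 1, 0, hpos _, ?_⟩
      rw [seg_add, seg_one, zero_add, List.flatMap_append, List.flatMap_singleton,
        List.length_append]
      omega

end Factors

/-! ### Growth of primitive substitutions -/

section Growth

variable {A B : Type*}

lemma length_flatMap_le {f : A → List B} {k : ℕ} (hf : ∀ a, (f a).length ≤ k) (w : List A) :
    (w.flatMap f).length ≤ w.length * k := by
  simpa using List.sum_le_card_nsmul (w.map fun a => (f a).length) k
    (by simpa using fun a _ => hf a)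

lemma le_length_flatMap {f : A → List B} {k : ℕ} (hf : ∀ a, k ≤ (f a).length) (w : List A) :
    w.length * k ≤ (w.flatMap f).length := by
  simpa using List.card_nsmul_le_sum (w.map fun a => (f a).length) k
    (by simpa using fun a _ => hf a)

lemma length_le_length_flatMap (f : A → List B) {w : List A} {a : A} (ha : a ∈ w) :
    (f a).length ≤ (w.flatMap f).length := by
  rw [List.length_flatMap]
  exact List.le_sum_of_mem (List.mem_map_of_mem ha)

lemma substIter_add (σ : A → List A) (m n : ℕ) (a : A) :
    substIter σ (m + n) a = (substIter σ n a).flatMap (substIter σ m) := by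
  induction m with
  | zero => simp [substIter]
  | succ m ih =>
    rw [Nat.succ_add, substIter, ih]
    exact List.flatMap_assoc

lemma exists_bound_length_substIter [Finite A] (σ : A → List A) (n : ℕ) :
    ∃ k, ∀ a, (substIter σ n a).length ≤ k := by
  obtain ⟨k, hk⟩ := Finite.bddAbove_range fun a => (substIter σ n a).length
  exact ⟨k, Set.forall_mem_range.1 hk⟩

variable {σ : A → List A}

lemma Primitive.exists_length_substIter_le_mul [Finite A] (hσ : Primitive σ) :
    ∃ k, ∀ n a b, (substIter σ n a).length ≤ (substIter σ n b).length * k := by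
  obtain ⟨N, hN⟩ := hσ
  obtain ⟨k, hk⟩ := exists_bound_length_substIter σ N
  refine ⟨k, fun n a b => ?_⟩
  calc (substIter σ n a).length
      ≤ ((substIter σ N b).flatMap (substIter σ n)).length := length_le_length_flatMap _ (hN a b)
    _ = ((substIter σ n b).flatMap (substIter σ N)).length := by
      rw [← substIter_add, ← substIter_add, add_comm]
    _ ≤ (substIter σ n b).length * k := length_flatMap_le hk _

lemma Primitive.exists_forall_le_length_substIter [Nontrivial A] (hσ : Primitive σ) (d : ℕ) :
    ∃ n, ∀ a, d ≤ (substIter σ n a).length := by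
  obtain ⟨N, hN⟩ := hσ
  obtain ⟨p, q, hpq⟩ := exists_pair_ne A
  have htwo (a : A) : 2 ≤ (substIter σ N a).length := by
    have hsub : [p, q] ⊆ substIter σ N a := fun b _ => hN b a
    exact ((List.nodup_cons.2 ⟨by simpa using hpq, List.nodup_singleton q⟩).subperm hsub).length_le
  have hpow (j : ℕ) : ∀ a, 2 ^ j ≤ (substIter σ (j * N) a).length := by
    induction j with
    | zero => simp [substIter]
    | succ j ih =>
      intro a
      rw [Nat.succ_mul, substIter_add, pow_succ']
      exact (Nat.mul_le_mul_right _ (htwo a)).trans (le_length_flatMap ih _)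
  exact ⟨d * N, fun a => Nat.lt_two_pow_self.le.trans (hpow d a)⟩

lemma Primitive.exists_length_substIter_comparable [Finite A] [Nontrivial A]
    (hσ : Primitive σ) :
    ∃ C, ∀ d > 0, ∃ n, ∀ a,
      d ≤ (substIter σ n a).length ∧ (substIter σ n a).length ≤ C * d := by
  classical
  obtain ⟨k, hk⟩ := hσ.exists_length_substIter_le_mul
  obtain ⟨l, hl⟩ := exists_bound_length_substIter σ 1
  refine ⟨k * l + 1, fun d hd => ?_⟩
  have hex := hσ.exists_forall_le_length_substIter d
  refine ⟨Nat.find hex, fun a => ⟨Nat.find_spec hex a, ?_⟩⟩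
  rcases hn : Nat.find hex with _ | n
  · exact Nat.mul_pos (Nat.succ_pos _) hd
  · obtain ⟨b, hb⟩ : ∃ b, (substIter σ n b).length < d := by
      simpa using Nat.find_min hex (m := n) (by omega)
    calc (substIter σ (n + 1) a).length
        ≤ (substIter σ n a).length * l := by
          rw [add_comm, substIter_add]
          exact length_flatMap_le hl _
      _ ≤ (substIter σ n b).length * k * l := Nat.mul_le_mul_right _ (hk n a b)
      _ ≤ d * k * l := by gcongr
      _ ≤ (k * l + 1) * d := by linarith

end Growth

/-! ### Linear appearance and bounded initial exponents -/

section Appearance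

variable {A : Type*} {σ : A → List A} {x : ℕ → A}

/-- The appearance function of `x` is linear with constant `C`: every factor of length `d + 1`
with `d > 0` already occurs at a position smaller than `C * d`. -/
def HasLinearAppearance (x : ℕ → A) (C : ℕ) : Prop :=
  ∀ d > 0, ∀ j, ∃ i < C * d, seg x i (d + 1) = seg x j (d + 1)

/-- The prefixes of `x` have exponents smaller than `K + 1`. A prefix of length `d + m` with period
`d` is encoded by an occurrence of the prefix of length `m` at position `d`. -/
def HasBoundedInitialExponent (x : ℕ → A) (K : ℕ) : Prop :=
  ∀ d > 0, ∀ m, seg x d m = seg x 0 m → m < K * d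

lemma IsFixedPoint.isPrefixOf_flatMap_substIter (hx : IsFixedPoint σ x) (n m : ℕ) :
    IsPrefixOf x ((seg x 0 m).flatMap (substIter σ n)) := by
  induction n with
  | zero =>
    rw [show substIter σ 0 = fun a => [a] from rfl, List.flatMap_singleton']
    exact isFactorAt_seg x 0 m
  | succ n ih =>
    have hsucc : (seg x 0 m).flatMap (substIter σ (n + 1)) =
        substApply σ ((seg x 0 m).flatMap (substIter σ n)) := List.flatMap_assoc.symm
    rw [hsucc, ih]
    exact hx _

lemma IsFixedPoint.isFactorAt_flatMap_substIter (hx : IsFixedPoint σ x) (n m k : ℕ) :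
    IsFactorAt x ((seg x 0 m).flatMap (substIter σ n)).length
      ((seg x m k).flatMap (substIter σ n)) := by
  have h := hx.isPrefixOf_flatMap_substIter n (m + k)
  rw [seg_add, List.flatMap_append, zero_add] at h
  simpa only [zero_add] using (isFactorAt_append_iff.1 h).2

theorem IsFixedPoint.exists_hasLinearAppearance [Finite A] [Nontrivial A]
    (hx : IsFixedPoint σ x) (hσ : Primitive σ) : ∃ C, HasLinearAppearance x C := by
  obtain ⟨C, hC⟩ := hσ.exists_length_substIter_comparable
  obtain ⟨R, hR⟩ := exists_bound_forall_exists_seg_eq x 2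
  refine ⟨(R + 1) * C, fun d hd j => ?_⟩
  obtain ⟨n, hn⟩ := hC d hd
  have hne (a : A) : substIter σ n a ≠ [] := List.length_pos_iff.1 (hd.trans_le (hn a).1)
  obtain ⟨m, t, ht, rfl⟩ := exists_eq_length_flatMap_seg_add hne x j
  obtain ⟨r, hrR, hr⟩ := hR m
  have hocc_m := hx.isFactorAt_flatMap_substIter n m 2
  have hocc_r := hx.isFactorAt_flatMap_substIter n r 2
  rw [hr] at hocc_r
  refine ⟨_, ?_, hocc_r.seg_add_eq_seg_add hocc_m (t := t) ?_⟩
  · calc ((seg x 0 r).flatMap (substIter σ n)).length + t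
        < r * (C * d) + C * d := by
          refine add_lt_add_of_le_of_lt ?_ (ht.trans_le (hn _).2)
          simpa using length_flatMap_le (fun a => (hn a).2) (seg x 0 r)
      _ ≤ R * (C * d) + C * d := by gcongr
      _ = (R + 1) * C * d := by ring
  · have hd_le : d ≤ (substIter σ n (x (m + 1))).length := (hn _).1
    rw [seg_add x m 1 1, seg_one, seg_one, List.flatMap_append, List.flatMap_singleton,
      List.flatMap_singleton, List.length_append]
    omega

lemma HasLinearAppearance.hasBoundedInitialExponent {C : ℕ} (hC : HasLinearAppearance x C)
    (hx : Aperiodic x) : HasBoundedInitialExponent x C := by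
  intro d hd m hm
  by_contra! hle
  refine hx ⟨d, hd, fun j => ?_⟩
  obtain ⟨i, hi, hij⟩ := hC d hd j
  rw [seg_eq_seg_iff] at hm hij
  calc x (j + d) = x (i + d) := (hij d (by omega)).symm
    _ = x i := by simpa [add_comm] using hm i (by omega)
    _ = x j := hij 0 (by omega)

lemma Aperiodic.nontrivial (hx : Aperiodic x) : Nontrivial A := by
  by_contra h
  rw [not_nontrivial_iff_subsingleton] at h
  exact hx ⟨1, le_rfl, fun _ => Subsingleton.elim _ _⟩

theorem IsFixedPoint.exists_hasBoundedInitialExponent [Finite A] (hx : IsFixedPoint σ x)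
    (hσ : Primitive σ) (hAp : Aperiodic x) : ∃ K, HasBoundedInitialExponent x K := by
  have := hAp.nontrivial
  obtain ⟨K, hK⟩ := hx.exists_hasLinearAppearance hσ
  exact ⟨K, hK.hasBoundedInitialExponent hAp⟩

end Appearance

/-! ### Prefix products in words of bounded initial exponent -/

namespace HasBoundedInitialExponent

variable {A : Type*} {x : ℕ → A} {K : ℕ} {u v : List A}

lemma pos (hx : HasBoundedInitialExponent x K) : 0 < K := by
  simpa [seg] using hx 1 one_pos 0

lemma length_lt_of_append (hx : HasBoundedInitialExponent x K) (hu : u ≠ [])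
    (hv : IsPrefixOf x v) (huv : IsPrefixOf x (u ++ v)) : v.length < K * u.length := by
  refine hx u.length (List.length_pos_iff.2 hu) v.length ?_
  have hv' := (isFactorAt_append_iff.1 huv).2
  rw [zero_add] at hv'
  exact hv'.symm.trans hv

lemma not_isPrefixOf_replicate (hx : HasBoundedInitialExponent x K) (hu : u ≠ []) :
    ¬ IsPrefixOf x (List.replicate (K + 1) u).flatten := by
  intro h
  have hpow : IsPrefixOf x (List.replicate K u).flatten :=
    h.of_prefix ⟨u, by simp [List.replicate_succ']⟩
  rw [List.replicate_succ, List.flatten_cons] at h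
  simpa using hx.length_lt_of_append hu hpow h

-- With `d = |v| - |u|`, the prefix of length `|u|` occurs at `|u|` and at `|u| + d`, so the prefix
-- of length `|u| - d` occurs at `d`.
lemma eq_of_isPrefixOf_append_self (hx : HasBoundedInitialExponent x K)
    (hu : IsPrefixOf x (u ++ u)) (hv : IsPrefixOf x (v ++ v)) (hle : u.length ≤ v.length)
    (hlt : (K + 1) * v.length < (K + 2) * u.length) : u = v := by
  obtain ⟨hu₀, hu₁⟩ := isFactorAt_append_iff.1 hu
  obtain ⟨hv₀, hv₁⟩ := isFactorAt_append_iff.1 hv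
  refine (IsPrefixOf.prefix_of_length_le hu₀ hv₀ hle).eq_of_length ?_
  obtain ⟨d, hd⟩ := Nat.exists_eq_add_of_le hle
  by_contra hne
  have hdu : (K + 1) * d < u.length := by
    rw [hd] at hlt
    linarith
  have hshift : seg x d (u.length - d) = seg x 0 (u.length - d) := by
    have hdle : d + (u.length - d) ≤ u.length := by
      rw [Nat.add_sub_cancel' ((Nat.le_mul_of_pos_left d K.succ_pos).trans hdu.le)]
    calc seg x d (u.length - d)
        = seg x (u.length + d) (u.length - d) := by
          simpa using hu₀.seg_add_eq_seg_add hu₁ hdle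
      _ = seg x 0 (u.length - d) := by
          simpa [hd] using hv₁.seg_add_eq_seg_add hv₀ (t := 0) (n := u.length - d) (by omega)
  have hexp := hx d (by omega) _ hshift
  rw [Nat.succ_mul] at hdu
  omega

lemma eq_of_mem_of_isPrefixOf_flatten (hx : HasBoundedInitialExponent x K) (hu : u ≠ [])
    {n : ℕ} {L : List (List A)} (hL : ∀ v ∈ L, IsPrefixOf x v)
    (hshort : ∀ v ∈ L, v.length < K * (n * u.length) → v = u) {i : ℕ} (hi : 0 < i)
    (hin : i + L.length ≤ n + 1) (h : IsPrefixOf x (List.replicate i u ++ L).flatten) :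
    ∀ v ∈ L, v = u := by
  induction L generalizing i with
  | nil => simp
  | cons v L ih =>
    rw [List.forall_mem_cons] at hL hshort ⊢
    rw [List.length_cons] at hin
    have hlt : v.length < K * (n * u.length) := by
      have hne : (List.replicate i u).flatten ≠ [] := by simp [hu, hi.ne']
      have hpre : IsPrefixOf x ((List.replicate i u).flatten ++ v) :=
        h.of_prefix ⟨L.flatten, by simp⟩
      calc v.length < K * (List.replicate i u).flatten.length :=
            hx.length_lt_of_append hne hL.1 hpre
        _ = K * (i * u.length) := by simp
        _ ≤ K * (n * u.length) := by gcongr; omega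
    obtain rfl : v = u := hshort.1 hlt
    refine ⟨rfl, ih hL.2 hshort.2 (Nat.succ_pos i) (by omega) ?_⟩
    rwa [List.replicate_succ', List.append_assoc]

end HasBoundedInitialExponent

/-! ### The coloring -/

lemma exists_coloring_lt_mul_of_eq {b : ℝ} (hb : 1 < b) (R : ℝ) :
    ∃ (N : ℕ) (f : ℝ → ZMod (N + 1)),
      ∀ s t, 0 < s → s ≤ t → t ≤ R * s → f s = f t → t < b * s := by
  refine ⟨⌈Real.logb b R⌉₊, fun s => (⌊Real.logb b s⌋ : ℤ), fun s t hs hst htR hf => ?_⟩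
  have ht : 0 < t := hs.trans_le hst
  have hlog : Real.logb b t - Real.logb b s = Real.logb b (t / s) :=
    (Real.logb_div ht.ne' hs.ne').symm
  have hlog_le : Real.logb b t - Real.logb b s ≤ ⌈Real.logb b R⌉₊ := by
    rw [hlog]
    exact (Real.logb_le_logb_of_le hb (div_pos ht hs) ((div_le_iff₀ hs).2 htR)).trans
      (Nat.le_ceil _)
  have hfloor_le : ⌊Real.logb b s⌋ ≤ ⌊Real.logb b t⌋ :=
    Int.floor_mono (Real.logb_le_logb_of_le hb hs hst)
  have hfloor_lt : ⌊Real.logb b t⌋ - ⌊Real.logb b s⌋ < (⌈Real.logb b R⌉₊ + 1 : ℕ) := by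
    have h₁ := Int.floor_le (Real.logb b t)
    have h₂ := Int.lt_floor_add_one (Real.logb b s)
    rw [← Int.cast_lt (R := ℝ)]
    push_cast
    linarith
  have hfloor : ⌊Real.logb b t⌋ = ⌊Real.logb b s⌋ := sub_eq_zero.1 <|
    Int.eq_zero_of_dvd_of_nonneg_of_lt (sub_nonneg.2 hfloor_le) hfloor_lt
      ((ZMod.intCast_eq_intCast_iff_dvd_sub _ _ _).1 hf)
  have hlog_lt : Real.logb b (t / s) < 1 := by
    rw [← hlog]
    exact (abs_lt.1 (Int.abs_sub_lt_one_of_floor_eq_floor hfloor)).2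
  rwa [Real.logb_lt_iff_lt_rpow hb (div_pos ht hs), Real.rpow_one, div_lt_iff₀ hs] at hlog_lt

theorem HasBoundedInitialExponent.exists_coloring {A : Type*} {x : ℕ → A} {K : ℕ}
    (hx : HasBoundedInitialExponent x K) :
    ∃ (C : Type) (_ : Fintype C) (c : List A → C), ∀ (u : List A) (L : List (List A)),
      u ≠ [] → L.length = K → (∀ v ∈ L, u.length ≤ v.length) → (∀ v ∈ L, c v = c u) →
        ¬ IsPrefixOf x (u :: L).flatten := by
  have hb : (1 : ℝ) < 1 + 1 / (K + 1) := lt_add_of_pos_right 1 (by positivity)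
  obtain ⟨N, f, hf⟩ := exists_coloring_lt_mul_of_eq hb (K * K)
  refine ⟨Prop × Prop × ZMod (N + 1), inferInstance,
    fun w => (IsPrefixOf x w, IsPrefixOf x (w ++ w), f w.length), ?_⟩
  intro u L hu hLK hle hc hpre
  simp only [Prod.mk.injEq, eq_iff_iff] at hc
  have hu_prefix : IsPrefixOf x u := hpre.of_prefix (List.prefix_append u L.flatten)
  have hL_prefix : ∀ v ∈ L, IsPrefixOf x v := fun v hv => (hc v hv).1.2 hu_prefix
  have hu_square : IsPrefixOf x (u ++ u) := by
    obtain ⟨v, L', rfl⟩ := List.exists_cons_of_length_pos (hLK ▸ hx.pos)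
    obtain ⟨s, rfl⟩ := hu_prefix.prefix_of_length_le (hL_prefix v List.mem_cons_self)
      (hle v List.mem_cons_self)
    exact hpre.of_prefix ⟨s ++ L'.flatten, by simp⟩
  have hL_short : ∀ v ∈ L, v.length < K * (K * u.length) → v = u := by
    intro v hv hlt
    have hratio : (v.length : ℝ) < (1 + 1 / (K + 1)) * u.length := by
      refine hf _ _ (by exact_mod_cast List.length_pos_iff.2 hu) (by exact_mod_cast hle v hv) ?_
        (hc v hv).2.2.symm
      rw [mul_assoc]
      exact_mod_cast hlt.le
    refine (hx.eq_of_isPrefixOf_append_self hu_square ((hc v hv).2.1.2 hu_square) (hle v hv)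
      ?_).symm
    field_simp at hratio
    rw [← Nat.cast_lt (α := ℝ)]
    push_cast
    linarith
  have hL_eq : ∀ v ∈ L, v = u :=
    hx.eq_of_mem_of_isPrefixOf_flatten hu hL_prefix hL_short one_pos (by omega) hpre
  rw [List.eq_replicate_of_mem hL_eq, hLK, ← List.replicate_succ] at hpre
  exact hx.not_isPrefixOf_replicate hu hpre

/-- If `x` is an aperiodic fixed point of a primitive substitution over a
finite alphabet, then there are a finite set `C` of colors, a factor coloring
`c : Fact(x) → C`, and a positive integer `h` such that no nonempty prefix of `x`
admits a monotone `c`-monochromatic factorization of length `h`. -/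
theorem stmt1 {A : Type*} [Fintype A] (σ : A → List A) (hσ : ∀ a, σ a ≠ [])
    (hprim : Primitive σ) (x : ℕ → A) (hfix : IsFixedPoint σ x) (hAp : Aperiodic x) :
    ∃ (C : Type) (_ : Fintype C) (c : {u : List A // IsFactor x u} → C) (h : ℕ),
      1 ≤ h ∧
      ∀ w : List A, w ≠ [] → IsPrefixOf x w →
        ¬ ∃ U : Fin h → {u : List A // IsFactor x u},
            w = (List.ofFn fun i => (U i).1).flatten ∧
            (∀ i j : Fin h, i ≤ j → (U i).1.length ≤ (U j).1.length) ∧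
            (∀ i j : Fin h, c (U i) = c (U j)) := by
  obtain ⟨K, hK⟩ := hfix.exists_hasBoundedInitialExponent hprim hAp
  obtain ⟨C, hC, c, hc⟩ := hK.exists_coloring
  refine ⟨C, hC, fun u => c u.1, K + 1, K.succ_pos, ?_⟩
  rintro w - hw ⟨U, rfl, hmono, hcol⟩
  rw [List.ofFn_succ] at hw
  refine hc (U 0).1 _ (U 0).2.1 List.length_ofFn ?_ ?_ hw
  · exact List.forall_mem_ofFn_iff.2 fun i => hmono 0 i.succ (Fin.zero_le _)
  · exact List.forall_mem_ofFn_iff.2 fun i => hcol i.succ 0
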